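/- Let R be a unital associative and commutative ring in which 3 is invertible, and let A be a unital associative R-algebra generated (as a unital R-algebra) by a set X. Let U be a two-sided ideal of A generated by a set S, and let W be the two-sided ideal of A generated by { [u, a_1, a_2] | u ∈ U, a_1, a_2 ∈ A }. Then W is generated, as a two-sided ideal of A, by the following elements, where s ranges over S and x_1, x_2, x_3, x_4, x_5 range over X: (1) [s, x_1, x_2]; (2) s[x_1, x_2, x_3]; (3) [s, x_1][x_2, x_3] + [s, x_2][x_1, x_3]; (4) s([x_1, x_2][x_3, x_4] + [x_1, x_3][x_2, x_4]). -/

import Mathlib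

/-- The commutator `[a, b] = a * b - b * a`. -/
def cm {A : Type*} [Ring A] (a b : A) : A := a * b - b * a

/-!
Write (1)-(4) for the four families of generators, in the order of the union in the theorem, and
`[a, b, c]` for `cm (cm a b) c`. Both inclusions are proved in a quotient ring, where membership
becomes an equation.

*The listed elements lie in `W`.* Modulo `W` every `[u, a]` with `u ∈ U` is central, so expanding
`[u * a, b, c] = 0` gives `u[a, b, c] + [u, b][a, c] + [u, c][a, b] = 0`. As `[a, b, c]` is skew in
`a, b`, this forces `[u, a][b, c]` to be alternating in all three letters, which is (3), and then
the relation reduces to `u[a, b, c] = 0`, which is (2). Applying (3) to `u = s * a` gives (4).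

*`W` is contained in the ideal of the listed elements.* Modulo (1)-(4), each `[s, x]` is central.
The element `[s, a][b, c, d]` is skew in `a, b` by (3) and symmetric under `a ↔ d` by (2) and (4);
with the Jacobi identity this makes it vanish (`cm_mul_triple_eq_zero`). Hence `[x, y, z]` and
`[x, y][z, t] + [x, z][y, t]` annihilate the two-sided ideal generated by `s` from the right.
Modulo the right annihilator of that ideal these elements are zero for letters in `X`, and then all
triple commutators vanish (`triple_eq_zero`). Finally `cm_central` extends the centrality of
`[s, x]` from letters to arbitrary elements, and `[d * s * e, a, b] = 0` follows by expansion.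
Both extensions use the same induction on left multiplication by letters.
-/

/-! ### Commutators in an algebra with given generators -/

section Generators

variable {R B : Type*} [CommRing R] [Ring B] [Algebra R B] {X : Set B}

/-- Induction for a generated algebra in which words grow on the left by one letter at a time. -/
lemma induction_left (hX : Algebra.adjoin R X = ⊤) {P : B → Prop} (h_one : P 1)
    (h_smul : ∀ (r : R) a, P a → P (r • a)) (h_add : ∀ a b, P a → P b → P (a + b))
    (h_mul : ∀ x ∈ X, ∀ a, P a → P (x * a)) (b : B) : P b := by
  have key : ∀ a, P a → P (b * a) := by
    have hb : b ∈ Algebra.adjoin R X := hX ▸ Algebra.mem_top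
    induction hb using Algebra.adjoin_induction with
    | mem x hx => exact h_mul x hx
    | algebraMap r => intro a ha; rw [← Algebra.smul_def]; exact h_smul r a ha
    | add x y _ _ h₁ h₂ => intro a ha; rw [add_mul]; exact h_add _ _ (h₁ a ha) (h₂ a ha)
    | mul x y _ _ h₁ h₂ => intro a ha; rw [mul_assoc]; exact h₁ _ (h₂ a ha)
  simpa using key 1 h_one

lemma cm_smul (r : R) (a b : B) : cm a (r • b) = r • cm a b := by
  simp [cm, smul_sub]

lemma smul_cm (r : R) (a b : B) : cm (r • a) b = r • cm a b := by
  simp [cm, smul_sub]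

lemma cm_add (a b c : B) : cm a (b + c) = cm a b + cm a c := by
  simp only [cm]; noncomm_ring

lemma add_cm (a b c : B) : cm (a + b) c = cm a c + cm b c := by
  simp only [cm]; noncomm_ring

lemma central_of_gen (hX : Algebra.adjoin R X = ⊤) {c : B} (h : ∀ x ∈ X, cm c x = 0) (b : B) :
    cm c b = 0 := by
  refine induction_left (P := fun b => cm c b = 0) hX ?_ ?_ ?_ ?_ b
  · simp [cm]
  · intro r a ha; rw [cm_smul, ha, smul_zero]
  · intro a b ha hb; rw [cm_add, ha, hb, add_zero]
  · intro x hx a ha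
    have hx := h x hx
    simp only [cm] at *
    linear_combination (norm := noncomm_ring) hx * a + x * ha

/-- If the relations (1), (3) and `[s, w][x, y, z] = 0` hold for letters, then `[s, a]` is central
for every `a`. The second relation is carried along because it is what makes
`[s, x * a] = x * [s, a] + [s, x] * a` commute with letters. -/
lemma cm_central (hX : Algebra.adjoin R X = ⊤) {s : B}
    (h1 : ∀ x ∈ X, ∀ y ∈ X, cm (cm s x) y = 0)
    (h3 : ∀ x ∈ X, ∀ y ∈ X, ∀ z ∈ X, cm s x * cm y z + cm s y * cm x z = 0)
    (h5 : ∀ w ∈ X, ∀ x ∈ X, ∀ y ∈ X, ∀ z ∈ X, cm s w * cm (cm x y) z = 0) (a : B) :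
    (∀ b, cm (cm s a) b = 0) ∧
      ∀ y ∈ X, ∀ z ∈ X, cm s a * cm y z + cm s y * cm a z = 0 := by
  have c1 : ∀ x ∈ X, ∀ b, cm (cm s x) b = 0 := fun x hx => central_of_gen hX (h1 x hx)
  have c2 : ∀ x ∈ X, ∀ y ∈ X, ∀ z ∈ X, ∀ b, cm (cm s x * cm y z) b = 0 := by
    intro x hx y hy z hz
    refine central_of_gen hX fun w hw => ?_
    have e1 := h5 x hx y hy z hz w hw
    have e2 := h1 x hx w hw
    generalize cm s x = p at *
    generalize cm y z = q at *
    simp only [cm] at *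
    linear_combination (norm := noncomm_ring) e1 + e2 * q
  refine induction_left (P := fun a => (∀ b, cm (cm s a) b = 0) ∧
      ∀ y ∈ X, ∀ z ∈ X, cm s a * cm y z + cm s y * cm a z = 0) hX ?_ ?_ ?_ ?_ a
  · simp [cm]
  · rintro r a ⟨ha, ha'⟩
    refine ⟨fun b => by rw [cm_smul, smul_cm, ha, smul_zero], fun y hy z hz => ?_⟩
    rw [cm_smul, smul_cm, smul_mul_assoc, mul_smul_comm, ← smul_add, ha' y hy z hz, smul_zero]
  · rintro a b ⟨ha, ha'⟩ ⟨hb, hb'⟩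
    refine ⟨fun c => by rw [cm_add, add_cm, ha, hb, add_zero], fun y hy z hz => ?_⟩
    rw [cm_add, add_cm]
    linear_combination (norm := noncomm_ring) ha' y hy z hz + hb' y hy z hz
  · rintro x hx a ⟨ha, ha'⟩
    have e : cm s (x * a) = x * cm s a + cm s x * a := by simp only [cm]; noncomm_ring
    refine ⟨central_of_gen hX fun z hz => ?_, fun y hy z hz => ?_⟩
    · have e1 := ha' x hx z hz
      have e2 := ha z
      have e3 := ha (cm x z)
      have e4 := c1 x hx z
      rw [e]
      generalize cm s a = p at *
      generalize cm s x = q at *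
      simp only [cm] at *
      linear_combination (norm := noncomm_ring) e1 - e3 + x * e2 + e4 * a
    · have e1 := ha' y hy z hz
      have e2 := h3 x hx y hy z hz
      have e3 := c1 x hx a
      have e4 := c2 x hx y hy z hz a
      have e5 := c1 y hy x
      have e6 : cm (x * a) z = x * cm a z + cm x z * a := by simp only [cm]; noncomm_ring
      rw [e, e6]
      generalize cm s a = p at *
      generalize cm s x = q at *
      generalize cm s y = q' at *
      generalize cm y z = u at *
      generalize cm a z = v at *
      generalize cm x z = v' at *
      simp only [cm] at *
      linear_combination (norm := noncomm_ring) x * e1 + e2 * a + e3 * u - e4 + e5 * v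

/-- The case `s = 1` of the theorem: if `[x, y, z]` and `[x, y][z, t] + [x, z][y, t]` vanish for
letters, then all triple commutators vanish. `cm_central` is applied first with `s` a letter and
then with `s` arbitrary. -/
lemma triple_eq_zero (hX : Algebra.adjoin R X = ⊤)
    (h2 : ∀ x ∈ X, ∀ y ∈ X, ∀ z ∈ X, cm (cm x y) z = 0)
    (h4 : ∀ x ∈ X, ∀ y ∈ X, ∀ z ∈ X, ∀ t ∈ X, cm x y * cm z t + cm x z * cm y t = 0)
    (a b c : B) : cm (cm a b) c = 0 := by
  have k : ∀ s ∈ X, ∀ a : B, (∀ b, cm (cm s a) b = 0) ∧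
      ∀ y ∈ X, ∀ z ∈ X, cm s a * cm y z + cm s y * cm a z = 0 := fun s hs a =>
    cm_central hX (h2 s hs) (h4 s hs)
      (fun _ _ x hx y hy z hz => by rw [h2 x hx y hy z hz, mul_zero]) a
  refine (cm_central hX (s := a) ?_ ?_ ?_ b).1 c
  · intro x hx y _
    have e := (k x hx a).1 y
    simp only [cm] at *
    linear_combination (norm := noncomm_ring) -e
  · intro x hx y hy z hz
    have e1 := (k x hx a).2 y hy z hz
    have e2 := (k y hy a).2 x hx z hz
    simp only [cm] at *
    linear_combination (norm := noncomm_ring) -e1 - e2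
  · intro _ _ x hx y hy z hz
    rw [h2 x hx y hy z hz, mul_zero]

/-- `[s, a][b, c, d]` is skew in `a, b`, by (3), and invariant under `a ↔ d`: by (2) it equals
`-s[b, c, d, a]`, and `s[[b, c], [d, a]] = 0` since by (4) `s[b, c][d, a]` is alternating. Hence it
is invariant under `b ↔ d`, and the Jacobi identity in `b, c, d` makes it vanish. -/
lemma cm_mul_triple_eq_zero {s : B}
    (h1 : ∀ x ∈ X, ∀ y ∈ X, cm (cm s x) y = 0)
    (h2 : ∀ x ∈ X, ∀ y ∈ X, ∀ z ∈ X, s * cm (cm x y) z = 0)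
    (h3 : ∀ x ∈ X, ∀ y ∈ X, ∀ z ∈ X, cm s x * cm y z + cm s y * cm x z = 0)
    (h4 : ∀ x ∈ X, ∀ y ∈ X, ∀ z ∈ X, ∀ t ∈ X, s * (cm x y * cm z t + cm x z * cm y t) = 0) :
    ∀ w ∈ X, ∀ x ∈ X, ∀ y ∈ X, ∀ z ∈ X, cm s w * cm (cm x y) z = 0 := by
  have skew : ∀ a ∈ X, ∀ b ∈ X, ∀ c ∈ X, ∀ d ∈ X,
      cm s a * cm (cm b c) d = -(cm s b * cm (cm a c) d) := by
    intro a ha b hb c hc d hd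
    have e1 := h3 a ha b hb c hc
    have e2 := h1 a ha d hd
    have e3 := h1 b hb d hd
    generalize cm s a = p at *
    generalize cm s b = q at *
    generalize cm b c = u at *
    generalize cm a c = v at *
    simp only [cm] at *
    linear_combination (norm := noncomm_ring) e1 * d - d * e1 - e2 * u - e3 * v
  have symm : ∀ a ∈ X, ∀ b ∈ X, ∀ c ∈ X, ∀ d ∈ X,
      cm s a * cm (cm b c) d = cm s d * cm (cm b c) a := by
    intro a ha b hb c hc d hd
    have e1 := h2 b hb c hc d hd
    have e2 := h2 b hb c hc a ha
    have e3 : s * (cm b c * cm d a - cm d a * cm b c) = 0 := by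
      have q1 := h4 b hb c hc d hd a ha
      have q2 := h4 d hd b hb a ha c hc
      have r1 : cm b d = -cm d b := by simp only [cm]; noncomm_ring
      have r2 : cm c a = -cm a c := by simp only [cm]; noncomm_ring
      rw [r1, r2] at q1
      linear_combination (norm := noncomm_ring) q1 - q2
    generalize cm b c = u at *
    simp only [cm] at *
    linear_combination (norm := noncomm_ring) e1 * a - a * e1 - e2 * d + d * e2 - e3
  have swap : ∀ a ∈ X, ∀ b ∈ X, ∀ c ∈ X, ∀ d ∈ X,
      cm s a * cm (cm b c) d = cm s a * cm (cm d c) b := by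
    intro a ha b hb c hc d hd
    rw [skew a ha b hb c hc d hd, symm b hb a ha c hc d hd, skew d hd a ha c hc b hb, neg_neg]
  intro a ha d hd b hb c hc
  have e := swap a ha b hb c hc d hd
  generalize cm s a = p at *
  simp only [cm] at *
  linear_combination (norm := noncomm_ring) -e

/-- An element annihilated by `s` and by all `[s, x]` is annihilated by `s * b` for every `b`, since
`s * x * a = x * s * a + a * [s, x]`. -/
lemma mul_mul_eq_zero (hX : Algebra.adjoin R X = ⊤) {s t : B}
    (h1 : ∀ x ∈ X, ∀ y ∈ X, cm (cm s x) y = 0)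
    (h : s * t = 0) (h' : ∀ x ∈ X, cm s x * t = 0) (b : B) : s * b * t = 0 := by
  refine induction_left (P := fun b => s * b * t = 0) hX ?_ ?_ ?_ ?_ b
  · simpa using h
  · intro r a ha; rw [mul_smul_comm, smul_mul_assoc, ha, smul_zero]
  · intro a b ha hb; rw [mul_add, add_mul, ha, hb, add_zero]
  · intro x hx a ha
    have e1 := central_of_gen hX (h1 x hx) a
    have e2 := h' x hx
    have e3 : s * (x * a) * t = x * (s * a * t) + cm s x * a * t := by
      simp only [cm]; noncomm_ring
    rw [e3]
    generalize cm s x = p at *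
    simp only [cm] at *
    linear_combination (norm := noncomm_ring) x * ha + e1 * t + a * e2

/-- The right annihilator of the two-sided ideal generated by `s`. -/
def rightAnn (s : B) : TwoSidedIdeal B :=
  TwoSidedIdeal.mk' {t | ∀ b, s * b * t = 0} (by simp)
    (fun hx hy b => by rw [mul_add, hx b, hy b, add_zero])
    (fun hx b => by rw [mul_neg, hx b, neg_zero])
    (fun {x y} hy b => by rw [← mul_assoc, mul_assoc s b x]; exact hy (b * x))
    (fun {x y} hx b => by rw [← mul_assoc, hx b, zero_mul])

lemma mem_rightAnn {s t : B} : t ∈ rightAnn s ↔ ∀ b, s * b * t = 0 := by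
  simp [rightAnn, TwoSidedIdeal.mem_mk']

end Generators

/-! ### Passing to quotients by two-sided ideals -/

section Quotient

variable {R B : Type*} [CommRing R] [Ring B] [Algebra R B]

/-- The quotient map by a two-sided ideal. -/
abbrev quo (I : TwoSidedIdeal B) : B →+* I.ringCon.Quotient := I.ringCon.mk'

lemma quo_eq_zero {I : TwoSidedIdeal B} {a : B} : quo I a = 0 ↔ a ∈ I := by
  rw [TwoSidedIdeal.mem_iff]
  exact I.ringCon.eq

lemma quo_surjective (I : TwoSidedIdeal B) : Function.Surjective (quo I) :=
  I.ringCon.mk'_surjective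

lemma map_cm {C : Type*} [Ring C] (f : B →+* C) (a b : B) : f (cm a b) = cm (f a) (f b) := by
  simp [cm]

lemma adjoin_quo {X : Set B} (hX : Algebra.adjoin R X = ⊤) (I : TwoSidedIdeal B) :
    Algebra.adjoin R (quo I '' X) = ⊤ := by
  have h := AlgHom.map_adjoin (I.ringCon.mkₐ (α := R)) X
  rw [hX, Algebra.map_top] at h
  have h' : Algebra.adjoin R ((I.ringCon.mkₐ (α := R)) '' X) = ⊤ := by
    rw [← h]
    exact (AlgHom.range_eq_top _).2 (I.ringCon.mkₐ_surjective)
  exact h'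

/-- `triple_eq_zero` modulo a two-sided ideal. -/
lemma triple_mem {X : Set B} (hX : Algebra.adjoin R X = ⊤) (I : TwoSidedIdeal B)
    (h2 : ∀ x ∈ X, ∀ y ∈ X, ∀ z ∈ X, cm (cm x y) z ∈ I)
    (h4 : ∀ x ∈ X, ∀ y ∈ X, ∀ z ∈ X, ∀ t ∈ X, cm x y * cm z t + cm x z * cm y t ∈ I)
    (a b c : B) : cm (cm a b) c ∈ I := by
  rw [← quo_eq_zero, map_cm, map_cm]
  apply triple_eq_zero (adjoin_quo hX I)
  · rintro _ ⟨x, hx, rfl⟩ _ ⟨y, hy, rfl⟩ _ ⟨z, hz, rfl⟩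
    rw [← map_cm, ← map_cm, quo_eq_zero]
    exact h2 x hx y hy z hz
  · rintro _ ⟨x, hx, rfl⟩ _ ⟨y, hy, rfl⟩ _ ⟨z, hz, rfl⟩ _ ⟨t, ht, rfl⟩
    simp only [← map_cm, ← map_mul, ← map_add]
    rw [quo_eq_zero]
    exact h4 x hx y hy z hz t ht

/-- If (1)-(4) vanish for letters, then `[u, a, b] = 0` for every product `u = d * s * e`. -/
lemma cm_cm_mul_mul_eq_zero {X : Set B} (hX : Algebra.adjoin R X = ⊤) {s : B}
    (h1 : ∀ x ∈ X, ∀ y ∈ X, cm (cm s x) y = 0)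
    (h2 : ∀ x ∈ X, ∀ y ∈ X, ∀ z ∈ X, s * cm (cm x y) z = 0)
    (h3 : ∀ x ∈ X, ∀ y ∈ X, ∀ z ∈ X, cm s x * cm y z + cm s y * cm x z = 0)
    (h4 : ∀ x ∈ X, ∀ y ∈ X, ∀ z ∈ X, ∀ t ∈ X, s * (cm x y * cm z t + cm x z * cm y t) = 0)
    (d e a b : B) : cm (cm (d * s * e) a) b = 0 := by
  have h5 := cm_mul_triple_eq_zero h1 h2 h3 h4
  have t2 : ∀ x ∈ X, ∀ y ∈ X, ∀ z ∈ X, cm (cm x y) z ∈ rightAnn s := fun x hx y hy z hz =>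
    mem_rightAnn.2 <| mul_mul_eq_zero hX h1 (h2 x hx y hy z hz)
      fun w hw => h5 w hw x hx y hy z hz
  have t4 : ∀ x ∈ X, ∀ y ∈ X, ∀ z ∈ X, ∀ t ∈ X,
      cm x y * cm z t + cm x z * cm y t ∈ rightAnn s := by
    intro x hx y hy z hz t ht
    refine mem_rightAnn.2 <| mul_mul_eq_zero hX h1 (h4 x hx y hy z hz t ht) fun w hw => ?_
    -- With `q` the relator, `[s, w] * q = [s * q, w] - s * [q, w]`, and `s * [q, w]` is a sum of
    -- terms `s * b * [_, _, _] * b'`.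
    have e0 := h4 x hx y hy z hz t ht
    have e1 := h2 x hx y hy w hw
    have e2 := mem_rightAnn.1 (t2 z hz t ht w hw) (cm x y)
    have e3 := h2 x hx z hz w hw
    have e4 := mem_rightAnn.1 (t2 y hy t ht w hw) (cm x z)
    generalize cm x y = p₁ at *
    generalize cm z t = p₂ at *
    generalize cm x z = p₃ at *
    generalize cm y t = p₄ at *
    simp only [cm] at *
    linear_combination (norm := noncomm_ring)
      e0 * w - w * e0 - e1 * p₂ - e2 - e3 * p₄ - e4
  have T : ∀ a b c f, s * f * cm (cm a b) c = 0 := fun a b c =>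
    mem_rightAnn.1 (triple_mem hX _ t2 t4 a b c)
  have C : ∀ a b, cm (cm s a) b = 0 := fun a => (cm_central hX h1 h3 h5 a).1
  -- `[s * f, a, b] = s[f, a, b] + [s, a, b]f + ([s, b][f, a] + [s, a][f, b])`, and the last
  -- bracket is `-[s, a * b, f]` because `[s, a]` and `[s, b]` are central.
  have K : ∀ f, cm (cm (s * f) a) b = 0 := by
    intro f
    have e1 := T f a b 1
    have e2 := C a b
    have e3 := C (a * b) f
    have e4 := C b (f * a)
    have e5 := C b a
    have e6 := C a f
    rw [mul_one] at e1
    have r1 : cm s (a * b) = a * cm s b + cm s a * b := by simp only [cm]; noncomm_ring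
    have r2 : cm (s * f) a = s * cm f a + cm s a * f := by simp only [cm]; noncomm_ring
    have r3 : s * b = b * s + cm s b := by simp only [cm]; noncomm_ring
    rw [r1] at e3
    rw [r2]
    generalize cm s a = p at *
    generalize cm s b = q at *
    simp only [cm] at *
    linear_combination (norm := noncomm_ring)
      e1 + e2 * f - e3 + e4 - e5 * f + e6 * b + r3 * (f * a - a * f)
  have e1 := K (d * e)
  have e2 := T e a b d
  have e3 := T e a b 1
  have e4 := C d a
  have e5 := C d b
  rw [mul_one] at e3
  have r : d * s * e = s * (d * e) - cm s d * e := by simp only [cm]; noncomm_ring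
  have e6 : cm s d * cm (cm e a) b = 0 := by
    rw [show cm s d = s * d - d * s from rfl]
    linear_combination (norm := noncomm_ring) e2 - d * e3
  rw [r]
  generalize s * (d * e) = v at *
  generalize cm s d = p at *
  simp only [cm] at *
  linear_combination (norm := noncomm_ring)
    e1 - e6 - e4 * e * b - e5 * e * a + e5 * a * e + b * e4 * e

/-- Conversely, if `[s * e, a, b] = 0` for all `e, a, b`, then (2) and (3) vanish identically. -/
lemma rels_of_central {s : B} (h : ∀ e a b, cm (cm (s * e) a) b = 0) (a b c : B) :
    s * cm (cm a b) c = 0 ∧ cm s a * cm b c + cm s b * cm a c = 0 := by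
  have h0 : ∀ a b, cm (cm s a) b = 0 := fun a b => by simpa using h 1 a b
  have f : ∀ a b c, s * cm (cm a b) c + cm s b * cm a c + cm s c * cm a b = 0 := by
    intro a b c
    have e1 := h a b c
    have e2 := h0 b c
    simp only [cm] at *
    linear_combination (norm := noncomm_ring) e1 - e2 * a
  have g : ∀ a b c, cm s a * cm b c + cm s b * cm a c = 0 := by
    intro a b c
    have e1 := f a b c
    have e2 := f b a c
    have e3 : cm b a = -cm a b := by simp only [cm]; noncomm_ring
    have e4 : cm (-cm a b) c = -cm (cm a b) c := by simp only [cm]; noncomm_ring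
    rw [e3, e4] at e2
    linear_combination (norm := noncomm_ring) e1 + e2
  refine ⟨?_, g a b c⟩
  have e1 := f a b c
  have e2 := g b a c
  have e3 := g a c b
  have e4 : cm c b = -cm b c := by simp only [cm]; noncomm_ring
  rw [e4] at e3
  linear_combination (norm := noncomm_ring) e1 - e2 - e3

end Quotient

theorem stmt_5 {R A : Type*} [CommRing R] [Ring A] [Algebra R A]
    (h3 : IsUnit (3 : R)) (X : Set A) (hX : Algebra.adjoin R X = ⊤)
    (S : Set A) (U : TwoSidedIdeal A) (hU : U = TwoSidedIdeal.span S)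
    (W : TwoSidedIdeal A)
    (hW : W = TwoSidedIdeal.span {w | ∃ u ∈ U, ∃ a₁ a₂ : A, w = cm (cm u a₁) a₂}) :
    W = TwoSidedIdeal.span (
      {a | ∃ s ∈ S, ∃ x₁ ∈ X, ∃ x₂ ∈ X, a = cm (cm s x₁) x₂} ∪
      {a | ∃ s ∈ S, ∃ x₁ ∈ X, ∃ x₂ ∈ X, ∃ x₃ ∈ X, a = s * cm (cm x₁ x₂) x₃} ∪
      {a | ∃ s ∈ S, ∃ x₁ ∈ X, ∃ x₂ ∈ X, ∃ x₃ ∈ X,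
        a = cm s x₁ * cm x₂ x₃ + cm s x₂ * cm x₁ x₃} ∪
      {a | ∃ s ∈ S, ∃ x₁ ∈ X, ∃ x₂ ∈ X, ∃ x₃ ∈ X, ∃ x₄ ∈ X,
        a = s * (cm x₁ x₂ * cm x₃ x₄ + cm x₁ x₃ * cm x₂ x₄)}) := by
  subst hU hW
  apply le_antisymm
  · set I := TwoSidedIdeal.span (_ ∪ _ : Set A) with hI
    rw [TwoSidedIdeal.span_le]
    have hgen : ∀ s ∈ S, ∀ d e a b, cm (cm (d * s * e) a) b ∈ I := by
      intro s hs d e a b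
      rw [← quo_eq_zero]
      simp only [map_cm, map_mul]
      apply cm_cm_mul_mul_eq_zero (adjoin_quo hX I)
      · rintro _ ⟨x, hx, rfl⟩ _ ⟨y, hy, rfl⟩
        simp only [← map_cm]
        exact quo_eq_zero.2 (TwoSidedIdeal.subset_span
          (Or.inl (Or.inl (Or.inl ⟨s, hs, x, hx, y, hy, rfl⟩))))
      · rintro _ ⟨x, hx, rfl⟩ _ ⟨y, hy, rfl⟩ _ ⟨z, hz, rfl⟩
        simp only [← map_cm, ← map_mul]
        exact quo_eq_zero.2 (TwoSidedIdeal.subset_span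
          (Or.inl (Or.inl (Or.inr ⟨s, hs, x, hx, y, hy, z, hz, rfl⟩))))
      · rintro _ ⟨x, hx, rfl⟩ _ ⟨y, hy, rfl⟩ _ ⟨z, hz, rfl⟩
        simp only [← map_cm, ← map_mul, ← map_add]
        exact quo_eq_zero.2 (TwoSidedIdeal.subset_span
          (Or.inl (Or.inr ⟨s, hs, x, hx, y, hy, z, hz, rfl⟩)))
      · rintro _ ⟨x, hx, rfl⟩ _ ⟨y, hy, rfl⟩ _ ⟨z, hz, rfl⟩ _ ⟨t, ht, rfl⟩
        simp only [← map_cm, ← map_mul, ← map_add]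
        exact quo_eq_zero.2 (TwoSidedIdeal.subset_span
          (Or.inr ⟨s, hs, x, hx, y, hy, z, hz, t, ht, rfl⟩))
    -- The elements `u` with `[d * u * e, a, b] ∈ I` for all `d, e, a, b` form a two-sided ideal.
    let V : TwoSidedIdeal A :=
      TwoSidedIdeal.mk' {u | ∀ d e a b, cm (cm (d * u * e) a) b ∈ I}
        (fun d e a b => by simp [cm, I.zero_mem])
        (fun {x y} hx hy d e a b => by
          rw [mul_add, add_mul, add_cm, add_cm]; exact I.add_mem (hx d e a b) (hy d e a b))
        (fun {x} hx d e a b => by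
          have h : cm (cm (d * -x * e) a) b = -cm (cm (d * x * e) a) b := by
            simp only [cm]; noncomm_ring
          rw [h]; exact I.neg_mem (hx d e a b))
        (fun {x y} hy d e a b => by rw [← mul_assoc d x y]; exact hy (d * x) e a b)
        (fun {x y} hx d e a b => by
          rw [← mul_assoc d x y, mul_assoc (d * x) y e]; exact hx d (y * e) a b)
    have hV : TwoSidedIdeal.span S ≤ V := TwoSidedIdeal.span_le.2 fun s hs =>
      (TwoSidedIdeal.mem_mk' _ _ _ _ _ _ s).2 (hgen s hs)
    rintro _ ⟨u, hu, a, b, rfl⟩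
    have h := (TwoSidedIdeal.mem_mk' _ _ _ _ _ _ u).1 (hV hu) 1 1 a b
    rwa [one_mul, mul_one] at h
  · set W := TwoSidedIdeal.span {w | ∃ u ∈ TwoSidedIdeal.span S, ∃ a₁ a₂ : A,
      w = cm (cm u a₁) a₂} with hW
    have hc : ∀ s ∈ S, ∀ f e a b, cm (cm (quo W (s * f) * e) a) b = 0 := by
      intro s hs f e a b
      obtain ⟨e, rfl⟩ := quo_surjective W e
      obtain ⟨a, rfl⟩ := quo_surjective W a
      obtain ⟨b, rfl⟩ := quo_surjective W b
      simp only [← map_cm, ← map_mul]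
      refine quo_eq_zero.2 (TwoSidedIdeal.subset_span ⟨_, ?_, a, b, rfl⟩)
      exact TwoSidedIdeal.mul_mem_right _ _ _ (TwoSidedIdeal.mul_mem_right _ _ _
        (TwoSidedIdeal.subset_span hs))
    have hs2 : ∀ s ∈ S, ∀ f x y z, s * f * cm (cm x y) z ∈ W := by
      intro s hs f x y z
      rw [← quo_eq_zero, map_mul, map_cm, map_cm]
      exact (rels_of_central (hc s hs f) _ _ _).1
    have hs3 : ∀ s ∈ S, ∀ f x y z, cm (s * f) x * cm y z + cm (s * f) y * cm x z ∈ W := by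
      intro s hs f x y z
      rw [← quo_eq_zero, map_add, map_mul, map_mul]
      simp only [map_cm (quo W)]
      exact (rels_of_central (hc s hs f) _ _ _).2
    rw [TwoSidedIdeal.span_le]
    rintro _ (((⟨s, hs, x, -, y, -, rfl⟩ | ⟨s, hs, x, -, y, -, z, -, rfl⟩) |
      ⟨s, hs, x, -, y, -, z, -, rfl⟩) | ⟨s, hs, x, -, y, -, z, -, t, -, rfl⟩)
    · exact TwoSidedIdeal.subset_span ⟨s, TwoSidedIdeal.subset_span hs, x, y, rfl⟩
    · simpa using hs2 s hs 1 x y z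
    · simpa using hs3 s hs 1 x y z
    -- Relation (3) for `s * x` minus `x` times relation (3) for `s`, up to `[s, y, x]`, `[s, z, x]`.
    · have m1 := hs3 s hs x y z t
      have m2 := W.mul_mem_left x _ (hs3 s hs 1 y z t)
      have m3 : ∀ v, cm (cm s v) x ∈ W := fun v =>
        TwoSidedIdeal.subset_span ⟨s, TwoSidedIdeal.subset_span hs, v, x, rfl⟩
      have m4 := W.mul_mem_right _ (cm z t) (m3 y)
      have m5 := W.mul_mem_right _ (cm y t) (m3 z)
      have e : s * (cm x y * cm z t + cm x z * cm y t) =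
          (cm (s * x) y * cm z t + cm (s * x) z * cm y t)
          - x * (cm (s * 1) y * cm z t + cm (s * 1) z * cm y t)
          - cm (cm s y) x * cm z t - cm (cm s z) x * cm y t := by
        simp only [cm]; noncomm_ring
      rw [SetLike.mem_coe, e]
      exact W.sub_mem (W.sub_mem (W.sub_mem m1 m2) m4) m5
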